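/- On V = F_{q²} ⊗ F_q ⊗ F_{q²} ⊗ F_q define the operators ξ₂ = (1−q⁴)⁻¹ (A⁺K⁻¹ ⊗ 1 ⊗ 1 ⊗ 1) and ξ₁ = (1−q²)⁻¹ (A⁻ ⊗ a⁺k⁻¹ ⊗ 1 ⊗ 1 + K ⊗ a⁻k⁻¹ ⊗ A⁺K⁻¹ ⊗ 1 + K ⊗ 1 ⊗ K⁻¹ ⊗ a⁺k⁻¹). In the renormalized basis |a,b,c,d⟩⟩ = D_a d_b D_c d_d |a⟩⊗|b⟩⊗|c⟩⊗|d⟩, where d_m = q^{−m(m−1)/2}(1−q²)^{−m} and D_m = q^{−m(m−1)}(1−q⁴)^{−m}, these satisfy ξ₂|a,b,c,d⟩⟩ = |a+1,b,c,d⟩⟩ and ξ₁|a,b,c,d⟩⟩ = [2]₁[b]₁ q^{2a−b+1} |a,b−1,c+1,d⟩⟩ + q^{2a−2c} |a,b,c,d+1⟩⟩ + [a]₂ |a−1,b+1,c,d⟩⟩ for all a,b,c,d ∈ ℕ (terms with a negative index are absent since their coefficients vanish). In particular ξ₁, ξ₂ act on the renormalized basis by exactly the same structure constants as left multiplication by e₁,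 e₂ on the PBW monomials b₁^a b₂^b b₃^c b₄^d of U_q⁺(C₂). -/

import Mathlib

noncomputable section

/-- The base field `K = ℚ(q)`, rational functions over `ℚ`. -/
abbrev K : Type := RatFunc ℚ

/-- The indeterminate `q`. -/
def q : K := RatFunc.X

/-- `⟨m⟩ = q^m − q^{−m}`. -/
def qbra (m : ℕ) : K := q ^ m - q⁻¹ ^ m

/-- `[m]₁ = ⟨m⟩/⟨1⟩`. -/
def qn1 (m : ℕ) : K := qbra m / qbra 1

/-- `[m]₂ = ⟨2m⟩/⟨2⟩`. -/
def qn2 (m : ℕ) : K := qbra (2 * m) / qbra 2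

/-- The Fock space with basis `|m⟩, m ∈ ℕ` (underlying both `F_q` and `F_{q²}`). -/
abbrev F : Type := ℕ →₀ K

/-- The basis vector `|m⟩`. -/
def ket (m : ℕ) : F := Finsupp.single m 1

/-- On `F_q`, the operator `k : |m⟩ ↦ q^m |m⟩`. -/
def opK : Module.End K F := Finsupp.lift F K ℕ fun m => (q ^ m) • ket m

/-- The inverse `k⁻¹ : |m⟩ ↦ q^{−m} |m⟩`. -/
def opKInv : Module.End K F := Finsupp.lift F K ℕ fun m => (q ^ m)⁻¹ • ket m

/-- The raising operator `a⁺ = A⁺ : |m⟩ ↦ |m+1⟩`. -/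
def opAp : Module.End K F := Finsupp.lift F K ℕ fun m => ket (m + 1)

/-- On `F_q`, the lowering operator `a⁻ : |m⟩ ↦ (1 − q^{2m}) |m-1⟩` (killing `|0⟩`). -/
def opAm : Module.End K F := Finsupp.lift F K ℕ fun m => (1 - q ^ (2 * m)) • ket (m - 1)

/-- On `F_{q²}`, the operator `K : |m⟩ ↦ q^{2m} |m⟩`. -/
def opK2 : Module.End K F := Finsupp.lift F K ℕ fun m => (q ^ (2 * m)) • ket m

/-- The inverse `K⁻¹ : |m⟩ ↦ q^{−2m} |m⟩`. -/
def opK2Inv : Module.End K F := Finsupp.lift F K ℕ fun m => (q ^ (2 * m))⁻¹ • ket m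

/-- On `F_{q²}`, the lowering operator `A⁻ : |m⟩ ↦ (1 − q^{4m}) |m-1⟩` (killing `|0⟩`). -/
def opAm2 : Module.End K F := Finsupp.lift F K ℕ fun m => (1 - q ^ (4 * m)) • ket (m - 1)

open TensorProduct

/-- The tensor product `V = F_{q²} ⊗ F_q ⊗ F_{q²} ⊗ F_q`. -/
abbrev V4 : Type := F ⊗[K] (F ⊗[K] (F ⊗[K] F))

instance : AddCommGroup (F ⊗[K] (F ⊗[K] F)) := by
  exact @TensorProduct.addCommGroup K _ F (F ⊗[K] F) _ _ _ _

instance : AddCommGroup V4 := by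
  exact @TensorProduct.addCommGroup K _ F (F ⊗[K] (F ⊗[K] F)) _ _ _ _

/-- `f ⊗ g ⊗ h ⊗ i` as an operator on `V`. -/
def tens4 (f g h i : Module.End K F) : Module.End K V4 :=
  TensorProduct.map f (TensorProduct.map g (TensorProduct.map h i))

/-- The operator `ξ₂ = (1−q⁴)⁻¹ (A⁺K⁻¹ ⊗ 1 ⊗ 1 ⊗ 1)`. -/
def xi2 : Module.End K V4 := (1 - q ^ 4)⁻¹ • tens4 (opAp * opK2Inv) 1 1 1

/-- The operator
`ξ₁ = (1−q²)⁻¹ (A⁻ ⊗ a⁺k⁻¹ ⊗ 1 ⊗ 1 + K ⊗ a⁻k⁻¹ ⊗ A⁺K⁻¹ ⊗ 1 + K ⊗ 1 ⊗ K⁻¹ ⊗ a⁺k⁻¹)`. -/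
def xi1 : Module.End K V4 :=
  (1 - q ^ 2)⁻¹ •
    (tens4 opAm2 (opAp * opKInv) 1 1
      + tens4 opK2 (opAm * opKInv) (opAp * opK2Inv) 1
      + tens4 opK2 1 opK2Inv (opAp * opKInv))

/-- The renormalization factor `d_m = q^{−m(m−1)/2}(1−q²)^{−m}`. -/
def dsm (m : ℕ) : K := (q ^ (m * (m - 1) / 2) * (1 - q ^ 2) ^ m)⁻¹

/-- The renormalization factor `D_m = q^{−m(m−1)}(1−q⁴)^{−m}`. -/
def dbig (m : ℕ) : K := (q ^ (m * (m - 1)) * (1 - q ^ 4) ^ m)⁻¹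

/-- The renormalized basis vector `|a,b,c,d⟩⟩ = D_a d_b D_c d_d |a⟩⊗|b⟩⊗|c⟩⊗|d⟩`. -/
def kett (a b c d : ℕ) : V4 :=
  (dbig a * dsm b * dbig c * dsm d) • (ket a ⊗ₜ[K] (ket b ⊗ₜ[K] (ket c ⊗ₜ[K] ket d)))

lemma q_ne_zero : q ≠ 0 := RatFunc.X_ne_zero

lemma one_sub_q_pow_ne_zero (n : ℕ) (hn : n ≠ 0) : (1 : K) - q ^ n ≠ 0 := by
  intro h
  have h1 : (algebraMap (Polynomial ℚ) (RatFunc ℚ)) (Polynomial.X ^ n) =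
      (algebraMap (Polynomial ℚ) (RatFunc ℚ)) 1 := by
    rw [map_pow, map_one, RatFunc.algebraMap_X]
    exact (sub_eq_zero.mp h).symm
  have h2 := RatFunc.algebraMap_injective ℚ h1
  have h3 := congrArg Polynomial.natDegree h2
  rw [Polynomial.natDegree_X_pow, Polynomial.natDegree_one] at h3
  exact hn h3

lemma lift_ket (f : ℕ → F) (m : ℕ) : (Finsupp.lift F K ℕ f) (ket m) = f m := by
  simp [ket]

lemma opKInv_ket (m : ℕ) : opKInv (ket m) = (q ^ m)⁻¹ • ket m := lift_ket _ m
lemma opAp_ket (m : ℕ) : opAp (ket m) = ket (m + 1) := lift_ket _ m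
lemma opAm_ket (m : ℕ) : opAm (ket m) = (1 - q ^ (2 * m)) • ket (m - 1) := lift_ket _ m
lemma opK2_ket (m : ℕ) : opK2 (ket m) = (q ^ (2 * m)) • ket m := lift_ket _ m
lemma opK2Inv_ket (m : ℕ) : opK2Inv (ket m) = (q ^ (2 * m))⁻¹ • ket m := lift_ket _ m
lemma opAm2_ket (m : ℕ) : opAm2 (ket m) = (1 - q ^ (4 * m)) • ket (m - 1) := lift_ket _ m

lemma opApKInv_ket (m : ℕ) : (opAp * opKInv) (ket m) = (q ^ m)⁻¹ • ket (m + 1) := by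
  rw [Module.End.mul_apply, opKInv_ket, map_smul, opAp_ket]
lemma opApK2Inv_ket (m : ℕ) :
    (opAp * opK2Inv) (ket m) = (q ^ (2 * m))⁻¹ • ket (m + 1) := by
  rw [Module.End.mul_apply, opK2Inv_ket, map_smul, opAp_ket]
lemma opAmKInv_ket (m : ℕ) :
    (opAm * opKInv) (ket m) = ((q ^ m)⁻¹ * (1 - q ^ (2 * m))) • ket (m - 1) := by
  rw [Module.End.mul_apply, opKInv_ket, map_smul, opAm_ket, smul_smul]
lemma one_ket (m : ℕ) : (1 : Module.End K F) (ket m) = (1 : K) • ket m := by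
  rw [Module.End.one_apply, one_smul]

lemma tens4_ket (f g h i : Module.End K F) (a b c d a' b' c' d' : ℕ) (r s t u : K)
    (hf : f (ket a) = r • ket a') (hg : g (ket b) = s • ket b')
    (hh : h (ket c) = t • ket c') (hi : i (ket d) = u • ket d') :
    tens4 f g h i (ket a ⊗ₜ[K] (ket b ⊗ₜ[K] (ket c ⊗ₜ[K] ket d)))
      = (r * s * t * u) • (ket a' ⊗ₜ[K] (ket b' ⊗ₜ[K] (ket c' ⊗ₜ[K] ket d'))) := by
  unfold tens4
  rw [TensorProduct.map_tmul, TensorProduct.map_tmul, TensorProduct.map_tmul, hf, hg, hh, hi]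
  simp only [TensorProduct.tmul_smul, ← TensorProduct.smul_tmul', smul_smul]
  congr 1
  ring

lemma dbig_succ (m : ℕ) :
    dbig (m + 1) = dbig m * (q ^ (2 * m))⁻¹ * (1 - q ^ 4)⁻¹ := by
  have h : (m + 1) * (m + 1 - 1) = m * (m - 1) + 2 * m := by
    cases m with
    | zero => rfl
    | succ n => simp only [Nat.add_sub_cancel]; ring
  unfold dbig
  rw [h, pow_add, pow_succ (1 - q ^ 4), ← mul_inv, ← mul_inv]
  congr 1
  ring

lemma dsm_succ (m : ℕ) :
    dsm (m + 1) = dsm m * (q ^ m)⁻¹ * (1 - q ^ 2)⁻¹ := by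
  have h : (m + 1) * (m + 1 - 1) / 2 = m * (m - 1) / 2 + m := by
    have : (m + 1) * (m + 1 - 1) = m * (m - 1) + m * 2 := by
      cases m with
      | zero => rfl
      | succ n => simp only [Nat.add_sub_cancel]; ring
    rw [this, Nat.add_mul_div_right _ _ (by norm_num)]
  unfold dsm
  rw [h, pow_add, pow_succ (1 - q ^ 2), ← mul_inv, ← mul_inv]
  congr 1
  ring

/-- `[m+1]₂` rewritten. -/
lemma field_qn2 {L : Type} [Field L] (x y : L) (hx : x ≠ 0) (hy : y ≠ 0)
    (h4 : 1 - x ^ 4 ≠ 0) :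
    (y * x ^ 2 - y⁻¹ * (x ^ 2)⁻¹) / (x ^ 2 - (x ^ 2)⁻¹)
      = (1 - y ^ 2 * x ^ 4) * y⁻¹ * (1 - x ^ 4)⁻¹ := by
  have h4' : x ^ 4 - 1 ≠ 0 := fun h => h4 (by linear_combination -h)
  have e : x ^ 2 - (x ^ 2)⁻¹ = -(1 - x ^ 4) / x ^ 2 := by field_simp; ring
  rw [e]
  field_simp
  ring

lemma field_qn1 {L : Type} [Field L] (x y : L) (hx : x ≠ 0) (hy : y ≠ 0)
    (h2 : 1 - x ^ 2 ≠ 0) :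
    (y * x - y⁻¹ * x⁻¹) / (x - x⁻¹)
      = (1 - y ^ 2 * x ^ 2) * y⁻¹ * (1 - x ^ 2)⁻¹ := by
  have e : x - x⁻¹ = -(1 - x ^ 2) / x := by field_simp; ring
  rw [e]
  field_simp
  ring

lemma qn2_succ (m : ℕ) :
    qn2 (m + 1) = (1 - q ^ (4 * (m + 1))) * (q ^ (2 * m))⁻¹ * (1 - q ^ 4)⁻¹ := by
  have h := field_qn2 q (q ^ (2 * m)) q_ne_zero (pow_ne_zero _ q_ne_zero)
    (one_sub_q_pow_ne_zero 4 (by norm_num))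
  have e : q ^ (4 * (m + 1)) = (q ^ (2 * m)) ^ 2 * q ^ 4 := by ring
  rw [e, ← h]
  unfold qn2 qbra
  rw [inv_pow, inv_pow, mul_add, pow_add, mul_one, mul_inv]

lemma qn1_succ (m : ℕ) :
    qn1 (m + 1) = (1 - q ^ (2 * (m + 1))) * (q ^ m)⁻¹ * (1 - q ^ 2)⁻¹ := by
  have h := field_qn1 q (q ^ m) q_ne_zero (pow_ne_zero _ q_ne_zero)
    (one_sub_q_pow_ne_zero 2 (by norm_num))
  have e : q ^ (2 * (m + 1)) = (q ^ m) ^ 2 * q ^ 2 := by ring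
  rw [e, ← h]
  unfold qn1 qbra
  rw [inv_pow, inv_pow, pow_succ, pow_one, mul_inv]

lemma qn1_zero : qn1 0 = 0 := by simp [qn1, qbra]
lemma qn2_zero : qn2 0 = 0 := by simp [qn2, qbra]

lemma coef1 (a b c d : ℕ) :
    (1 - q ^ 2)⁻¹ * ((dbig a * dsm b * dbig c * dsm d) *
      ((1 - q ^ (4 * a)) * (q ^ b)⁻¹ * 1 * 1))
    = qn2 a * (dbig (a - 1) * dsm (b + 1) * dbig c * dsm d) := by
  cases a with
  | zero => simp [qn2_zero]
  | succ n =>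
    rw [Nat.add_sub_cancel, qn2_succ, dbig_succ, dsm_succ]
    ring

lemma field_mid {L : Type} [Field L] (x A B C D1 D2 D3 D4 E : L) (hx : x ≠ 0) (hB : B ≠ 0)
    (h2 : 1 - x ^ 2 ≠ 0) (h4 : 1 - x ^ 4 ≠ 0) :
    (1 - x ^ 2)⁻¹ * ((D1 * (D2 * B⁻¹ * (1 - x ^ 2)⁻¹) * D3 * D4) *
      (A * ((B * x)⁻¹ * E) * C * 1))
    = ((1 - x ^ 2) ⁻¹ * x⁻¹ * (1 - x ^ 4)) * (E * B⁻¹ * (1 - x ^ 2)⁻¹) * (A * B⁻¹) *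
      (D1 * D2 * (D3 * C * (1 - x ^ 4)⁻¹) * D4) := by
  field_simp

lemma coef2 (a b c d : ℕ) :
    (1 - q ^ 2)⁻¹ * ((dbig a * dsm b * dbig c * dsm d) *
      (q ^ (2 * a) * ((q ^ b)⁻¹ * (1 - q ^ (2 * b))) * (q ^ (2 * c))⁻¹ * 1))
    = (qn1 2 * qn1 b * q ^ (2 * (a : ℤ) - b + 1)) *
      (dbig a * dsm (b - 1) * dbig (c + 1) * dsm d) := by
  cases b with
  | zero => simp [qn1_zero]
  | succ n =>
    have h2 : qn1 2 = (1 - q ^ 2)⁻¹ * q⁻¹ * (1 - q ^ 4) := by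
      rw [qn1_succ 1, pow_one]; ring
    have hz : q ^ (2 * (a : ℤ) - ((n + 1 : ℕ) : ℤ) + 1) = q ^ (2 * a) * (q ^ n)⁻¹ := by
      rw [show (2 * (a : ℤ) - ((n + 1 : ℕ) : ℤ) + 1) = ((2 * a : ℕ) : ℤ) - (n : ℕ) by
        push_cast; ring, zpow_sub₀ q_ne_zero, zpow_natCast, zpow_natCast, div_eq_mul_inv]
    rw [Nat.add_sub_cancel, hz, h2, qn1_succ, dbig_succ, dsm_succ, pow_succ q n]
    exact field_mid q _ _ _ _ _ _ _ _ q_ne_zero (pow_ne_zero _ q_ne_zero)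
      (one_sub_q_pow_ne_zero 2 (by norm_num)) (one_sub_q_pow_ne_zero 4 (by norm_num))

lemma coef3 (a b c d : ℕ) :
    (1 - q ^ 2)⁻¹ * ((dbig a * dsm b * dbig c * dsm d) *
      (q ^ (2 * a) * 1 * (q ^ (2 * c))⁻¹ * (q ^ d)⁻¹))
    = q ^ (2 * (a : ℤ) - 2 * c) * (dbig a * dsm b * dbig c * dsm (d + 1)) := by
  have hz : q ^ (2 * (a : ℤ) - 2 * c) = q ^ (2 * a) * (q ^ (2 * c))⁻¹ := by
    rw [show (2 * (a : ℤ) - 2 * c) = ((2 * a : ℕ) : ℤ) - (2 * c : ℕ) by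
      push_cast; ring, zpow_sub₀ q_ne_zero, zpow_natCast, zpow_natCast, div_eq_mul_inv]
  rw [hz, dsm_succ]
  ring

/-- the action of `ξ₁, ξ₂` on the renormalized basis reproduces the
structure constants of left multiplication by `e₁, e₂` on the PBW monomials
`b₁^a b₂^b b₃^c b₄^d` of `U_q⁺(C₂)`.  (Terms with a negative index appear with
vanishing coefficient, so truncated subtraction on `ℕ` realizes the convention.) -/
theorem statement14 (a b c d : ℕ) :
    xi2 (kett a b c d) = kett (a + 1) b c d ∧
    xi1 (kett a b c d)
      = (qn1 2 * qn1 b * q ^ (2 * (a : ℤ) - b + 1)) • kett a (b - 1) (c + 1) d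
        + (q ^ (2 * (a : ℤ) - 2 * c)) • kett a b c (d + 1)
        + qn2 a • kett (a - 1) (b + 1) c d := by
  constructor
  · unfold xi2 kett
    rw [LinearMap.smul_apply, map_smul,
      tens4_ket _ _ _ _ a b c d _ _ _ _ _ _ _ _ (opApK2Inv_ket a) (one_ket b) (one_ket c)
        (one_ket d), smul_smul, smul_smul, dbig_succ]
    congr 1
    ring
  · unfold xi1 kett
    rw [LinearMap.smul_apply, map_smul, LinearMap.add_apply, LinearMap.add_apply,
      tens4_ket _ _ _ _ a b c d _ _ _ _ _ _ _ _ (opAm2_ket a) (opApKInv_ket b) (one_ket c)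
        (one_ket d),
      tens4_ket _ _ _ _ a b c d _ _ _ _ _ _ _ _ (opK2_ket a) (opAmKInv_ket b)
        (opApK2Inv_ket c) (one_ket d),
      tens4_ket _ _ _ _ a b c d _ _ _ _ _ _ _ _ (opK2_ket a) (one_ket b) (opK2Inv_ket c)
        (opApKInv_ket d)]
    simp only [smul_add, smul_smul]
    rw [coef1, coef2, coef3]
    abel
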